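/- Let (p_n)_{n≥1} be a Schauder decomposition of a complex Banach space X with K := sup_{N≥1} ‖P_N‖, and set Q_N := I − P_N. Let (a_n)_{n≥1} be a nondecreasing sequence of positive real numbers with a_n → ∞, and let B = M_b ∈ B(X) be the multiplier operator associated with b_n = a_n^{-1}. Then for every t > 0 and every N ≥ 1, ‖exp(−tB) − Q_N‖ ≤ 2(1+K) ( e^{−t/a_N} + (1 − e^{−t/a_{N+1}}) ). -/

import Mathlib

open Filter Topology NormedSpace

/-- Average over all sign vectors `(ε_1,…,ε_k) ∈ {−1,1}^k` of `‖∑_j ε_j v_j‖`. -/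
noncomputable def signAvg {X : Type*} [NormedAddCommGroup X] [NormedSpace ℂ X]
    (k : ℕ) (v : Fin k → X) : ℝ :=
  (2 ^ k : ℝ)⁻¹ * ∑ ε : Fin k → Bool, ‖∑ j : Fin k, (if ε j then (1 : ℝ) else -1) • v j‖

/-- A set of bounded operators on `X` is `R`-bounded. -/
def IsRBounded {X : Type*} [NormedAddCommGroup X] [NormedSpace ℂ X]
    (F : Set (X →L[ℂ] X)) : Prop :=
  ∃ C : ℝ, 0 ≤ C ∧ ∀ (k : ℕ) (T : Fin k → X →L[ℂ] X) (x : Fin k → X),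
    (∀ j, T j ∈ F) → signAvg k (fun j => (T j) (x j)) ≤ C * signAvg k x

/-- `(p n)` is a Schauder decomposition of `X`: the `p n` are pairwise "orthogonal"
bounded projections whose partial sums converge pointwise to the identity.
(Indexing starts at `0`, corresponding to `n = 1` in the classical notation.) -/
def IsSchauderDecomposition {X : Type*} [NormedAddCommGroup X] [NormedSpace ℂ X]
    (p : ℕ → X →L[ℂ] X) : Prop :=
  (∀ n, (p n).comp (p n) = p n) ∧
  (∀ m n, m ≠ n → (p m).comp (p n) = 0) ∧
  (∀ x : X, Tendsto (fun N => ∑ n ∈ Finset.range N, p n x) atTop (nhds x))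

/-- The partial sum projection `P_N = ∑_{n<N} p_n`. -/
noncomputable def partialSum {X : Type*} [NormedAddCommGroup X] [NormedSpace ℂ X]
    (p : ℕ → X →L[ℂ] X) (N : ℕ) : X →L[ℂ] X :=
  ∑ n ∈ Finset.range N, p n

/-!
The operator `exp (-tB) - Q_N` is itself a multiplier `M_e`: its coefficients are
`e_n = exp (-t / a_n)` for `n ≤ N` and `e_n = exp (-t / a_n) - 1` for `n > N`. Summation by parts
bounds `‖M_e‖` by `K (lim |e_n| + ∑ |e_{n+1} - e_n|)`. Since `exp (-t / a_n)` increases within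
`[0, 1]`, the only step at which `e` can decrease is the one from `N` to `N + 1`, and the bracket
telescopes to at most `2 (exp (-t / a_N) + (1 - exp (-t / a_{N+1})))`.
-/

/-- The norm of the sequence `c₀, …, c_m, 0, 0, …` in the space of sequences of bounded variation:
the total variation of the truncation of `c` after the index `m`. -/
noncomputable def truncatedVariation {E : Type*} [SeminormedAddCommGroup E] (c : ℕ → E) (m : ℕ) :
    ℝ :=
  ‖c m‖ + ∑ i ∈ Finset.range m, ‖c (i + 1) - c i‖

theorem truncatedVariation_ofReal (c : ℕ → ℝ) (m : ℕ) :
    truncatedVariation (fun n ↦ (c n : ℂ)) m = truncatedVariation c m := by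
  simp only [truncatedVariation, ← Complex.ofReal_sub, Complex.norm_real]

theorem norm_sum_smul_le_truncatedVariation_mul {𝕜 E : Type*} [NormedField 𝕜]
    [SeminormedAddCommGroup E] [NormedSpace 𝕜 E] {c : ℕ → 𝕜} {f : ℕ → E} {R : ℝ} {m : ℕ}
    (hf : ∀ k ≤ m, ‖∑ i ∈ Finset.range (k + 1), f i‖ ≤ R) :
    ‖∑ i ∈ Finset.range (m + 1), c i • f i‖ ≤ truncatedVariation c m * R := by
  rw [Finset.sum_range_by_parts, Nat.add_sub_cancel, truncatedVariation, add_mul, Finset.sum_mul]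
  refine (norm_sub_le _ _).trans (add_le_add ?_ (norm_sum_le_of_le _ fun i hi ↦ ?_))
  · exact (norm_smul_le _ _).trans (by gcongr; exact hf m le_rfl)
  · exact (norm_smul_le _ _).trans (by gcongr; exact hf i (Finset.mem_range.1 hi).le)

/-- The indicator function of `{n | N ≤ n}`, the coefficient sequence of the multiplier
`1 - partialSum p N`. -/
def tailIndicator (N n : ℕ) : ℝ :=
  if n < N then 0 else 1

theorem tailIndicator_succ_sub (N i : ℕ) :
    tailIndicator (N + 1) (i + 1) - tailIndicator (N + 1) i = if i = N then 1 else 0 := by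
  grind [tailIndicator]

theorem truncatedVariation_sub_tailIndicator_le {c : ℕ → ℝ} (hc : Monotone c)
    (hc0 : ∀ n, 0 ≤ c n) (hc1 : ∀ n, c n ≤ 1) (N m : ℕ) :
    truncatedVariation (fun n ↦ c n - tailIndicator (N + 1) n) m ≤
      2 * (c N + (1 - c (N + 1))) := by
  have step (i : ℕ) :
      ‖c (i + 1) - tailIndicator (N + 1) (i + 1) - (c i - tailIndicator (N + 1) i)‖ =
        (c (i + 1) - c i) + if i = N then 1 - 2 * (c (N + 1) - c N) else 0 := by
    rw [sub_sub_sub_comm, tailIndicator_succ_sub, Real.norm_eq_abs]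
    split_ifs with hi
    · subst hi
      rw [abs_of_nonpos (by linarith [hc1 (i + 1), hc0 i])]
      ring
    · rw [sub_zero, add_zero, abs_of_nonneg (sub_nonneg.2 (hc i.le_succ))]
  have variation :
      ∑ i ∈ Finset.range m,
          ‖c (i + 1) - tailIndicator (N + 1) (i + 1) - (c i - tailIndicator (N + 1) i)‖ =
        (c m - c 0) + if N < m then 1 - 2 * (c (N + 1) - c N) else 0 := by
    simp only [step, Finset.sum_add_distrib, Finset.sum_range_sub, Finset.sum_ite_eq',
      Finset.mem_range]
  rw [truncatedVariation, variation, Real.norm_eq_abs]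
  rcases lt_or_ge N m with hNm | hmN
  · rw [if_pos hNm, tailIndicator, if_neg (by lia), abs_of_nonpos (sub_nonpos.2 (hc1 m))]
    linarith [hc0 0]
  · rw [if_neg hmN.not_gt, tailIndicator, if_pos (by lia), sub_zero, abs_of_nonneg (hc0 m)]
    linarith [hc0 0, hc hmN, hc1 (N + 1)]

theorem exp_apply_of_apply_eq_smul {𝕜 E : Type*} [RCLike 𝕜] [NormedAddCommGroup E]
    [NormedSpace 𝕜 E] [CompleteSpace E] {A : E →L[𝕜] E} {μ : 𝕜} {v : E} (h : A v = μ • v) :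
    exp A v = exp μ • v := by
  have pow_apply (n : ℕ) : (A ^ n) v = μ ^ n • v := by
    induction n with
    | zero => simp
    | succ n ih => rw [pow_succ', mul_apply_eq_comp, ih, map_smul, h, smul_smul, pow_succ]
  have hasSum_exp := (exp_series_hasSum_exp' (𝕂 := 𝕜) A).mapL (ContinuousLinearMap.apply 𝕜 E v)
  refine hasSum_exp.unique (((exp_series_hasSum_exp' (𝕂 := 𝕜) μ).smul_const v).congr_fun ?_)
  simp [pow_apply, smul_smul]

section Multipliers

variable {X : Type*} [NormedAddCommGroup X] [NormedSpace ℂ X]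

/-- `M` is the multiplier operator `M_c x = ∑ c_n p_n x`. The series need only converge
conditionally, so it is encoded as the limit of its partial sums. -/
def IsMultiplier (p : ℕ → X →L[ℂ] X) (c : ℕ → ℂ) (M : X →L[ℂ] X) : Prop :=
  ∀ x, Tendsto (fun N ↦ ∑ n ∈ Finset.range N, c n • p n x) atTop (𝓝 (M x))

variable {p : ℕ → X →L[ℂ] X} {c d : ℕ → ℂ} {M L : X →L[ℂ] X} {K : ℝ}

theorem IsSchauderDecomposition.apply_apply (hp : IsSchauderDecomposition p) (m n : ℕ) (x : X) :
    p m (p n x) = if m = n then p n x else 0 := by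
  split_ifs with h
  · exact h ▸ DFunLike.congr_fun (hp.1 m) x
  · exact DFunLike.congr_fun (hp.2.1 m n h) x

theorem IsSchauderDecomposition.isMultiplier_iff (hp : IsSchauderDecomposition p) :
    IsMultiplier p c M ↔ ∀ n x, M (p n x) = c n • p n x := by
  refine ⟨fun hM n x ↦ ?_, fun hM x ↦ ?_⟩
  · refine tendsto_nhds_unique (hM (p n x)) (tendsto_const_nhds.congr' ?_)
    filter_upwards [eventually_gt_atTop n] with N hN
    simp [hp.apply_apply, hN]
  · simpa only [Function.comp_def, map_sum, hM] using (M.continuous.tendsto x).comp (hp.2.2 x)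

namespace IsMultiplier

theorem sub (hM : IsMultiplier p c M) (hL : IsMultiplier p d L) :
    IsMultiplier p (fun n ↦ c n - d n) (M - L) := fun x ↦ by
  simpa only [sub_smul, Finset.sum_sub_distrib, sub_apply] using (hM x).sub (hL x)

theorem const_smul (hM : IsMultiplier p c M) (r : ℂ) :
    IsMultiplier p (fun n ↦ r * c n) (r • M) := fun x ↦ by
  simpa only [mul_smul, Finset.smul_sum, smul_apply] using (hM x).const_smul r

protected theorem exp [CompleteSpace X] (hp : IsSchauderDecomposition p)
    (hM : IsMultiplier p c M) : IsMultiplier p (fun n ↦ Complex.exp (c n)) (exp M) :=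
  hp.isMultiplier_iff.2 fun n x ↦ by
    rw [Complex.exp_eq_exp_ℂ, exp_apply_of_apply_eq_smul (hp.isMultiplier_iff.1 hM n x)]

theorem opNorm_le (hM : IsMultiplier p c M) (hK : ∀ N, ‖partialSum p (N + 1)‖ ≤ K) {V : ℝ}
    (hV : ∀ m, truncatedVariation c m ≤ V) : ‖M‖ ≤ V * K := by
  have hK0 : 0 ≤ K := (norm_nonneg _).trans (hK 0)
  have hV0 : 0 ≤ V := le_trans (by unfold truncatedVariation; positivity) (hV 0)
  refine M.opNorm_le_bound (by positivity) fun x ↦ ?_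
  have partialSum_le (k : ℕ) : ‖∑ i ∈ Finset.range (k + 1), p i x‖ ≤ K * ‖x‖ := by
    simpa only [partialSum, sum_apply] using (partialSum p (k + 1)).le_of_opNorm_le (hK k) x
  refine le_of_tendsto' ((hM x).comp (tendsto_add_atTop_nat 1)).norm fun m ↦ ?_
  calc ‖∑ i ∈ Finset.range (m + 1), c i • p i x‖
      ≤ truncatedVariation c m * (K * ‖x‖) :=
        norm_sum_smul_le_truncatedVariation_mul fun k _ ↦ partialSum_le k
    _ ≤ V * (K * ‖x‖) := by gcongr; exact hV m
    _ = V * K * ‖x‖ := (mul_assoc _ _ _).symm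

end IsMultiplier

theorem IsSchauderDecomposition.isMultiplier_one_sub_partialSum (hp : IsSchauderDecomposition p)
    (N : ℕ) : IsMultiplier p (fun n ↦ (tailIndicator N n : ℂ)) (1 - partialSum p N) :=
  hp.isMultiplier_iff.2 fun n x ↦ by
    by_cases hn : n < N <;> simp [partialSum, tailIndicator, hp.apply_apply, hn]

theorem IsMultiplier.norm_sub_one_sub_partialSum_le {c : ℕ → ℝ}
    (hM : IsMultiplier p (fun n ↦ (c n : ℂ)) M) (hp : IsSchauderDecomposition p)
    (hK : ∀ N, ‖partialSum p (N + 1)‖ ≤ K) (hc : Monotone c) (hc0 : ∀ n, 0 ≤ c n)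
    (hc1 : ∀ n, c n ≤ 1) (N : ℕ) :
    ‖M - (1 - partialSum p (N + 1))‖ ≤ 2 * (c N + (1 - c (N + 1))) * K := by
  refine (hM.sub (hp.isMultiplier_one_sub_partialSum (N + 1))).opNorm_le hK fun m ↦ ?_
  simp only [← Complex.ofReal_sub, truncatedVariation_ofReal]
  exact truncatedVariation_sub_tailIndicator_le hc hc0 hc1 N m

theorem statement9_general [CompleteSpace X] (hp : IsSchauderDecomposition p)
    (hK : ∀ N, ‖partialSum p (N + 1)‖ ≤ K) {b : ℕ → ℝ} (hb : Antitone b) (hb0 : ∀ n, 0 ≤ b n)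
    {B : X →L[ℂ] X} (hB : IsMultiplier p (fun n ↦ (b n : ℂ)) B) {t : ℝ} (ht : 0 ≤ t) (N : ℕ) :
    ‖exp (-((t : ℂ) • B)) - (1 - partialSum p (N + 1))‖ ≤
      2 * (Real.exp (-(t * b N)) + (1 - Real.exp (-(t * b (N + 1))))) * K := by
  have hexp : IsMultiplier p (fun n ↦ (Real.exp (-(t * b n)) : ℂ)) (exp (-((t : ℂ) • B))) := by
    simpa using (hB.const_smul (-t)).exp hp
  refine hexp.norm_sub_one_sub_partialSum_le hp hK (fun m n hmn ↦ ?_)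
    (fun n ↦ (Real.exp_pos _).le) (fun n ↦ ?_) N
  · exact Real.exp_le_exp.2 (neg_le_neg (mul_le_mul_of_nonneg_left (hb hmn) ht))
  · exact Real.exp_le_one_iff.2 (neg_nonpos.2 (mul_nonneg ht (hb0 n)))

end Multipliers

/-- Norm estimate `‖exp(−tB) − Q_N‖ ≤ 2(1+K)(e^{−t/a_N} + (1 − e^{−t/a_{N+1}}))`, where
`B = M_b`, `b_n = a_n⁻¹`, `Q_N = I − P_N`. (The index `N + 1` corresponds to `N ≥ 1`
in classical `1`-based notation.) -/
theorem statement9 {X : Type*} [NormedAddCommGroup X] [NormedSpace ℂ X] [CompleteSpace X]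
    (p : ℕ → X →L[ℂ] X) (hp : IsSchauderDecomposition p)
    (K : ℝ) (hK : ∀ N : ℕ, ‖partialSum p (N + 1)‖ ≤ K)
    (a : ℕ → ℝ) (ha : Monotone a) (hapos : ∀ n, 0 < a n) (hatop : Tendsto a atTop atTop)
    (B : X →L[ℂ] X)
    (hB : ∀ x : X, Tendsto (fun N => ∑ n ∈ Finset.range N, (((a n)⁻¹ : ℝ) : ℂ) • p n x)
      atTop (nhds (B x))) :
    ∀ t : ℝ, 0 < t → ∀ N : ℕ,
      ‖exp (-((t : ℂ) • B)) - (1 - partialSum p (N + 1))‖ ≤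
        2 * (1 + K) * (Real.exp (-(t / a N)) + (1 - Real.exp (-(t / a (N + 1))))) := by
  intro t ht N
  have general := statement9_general hp hK (fun _ _ h ↦ inv_anti₀ (hapos _) (ha h))
    (fun n ↦ (inv_pos.2 (hapos n)).le) hB ht.le N
  simp only [← div_eq_mul_inv] at general
  linarith [Real.exp_pos (-(t / a N)),
    Real.exp_le_one_iff.2 (neg_nonpos.2 (div_pos ht (hapos (N + 1))).le)]
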